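/- Let S = {p, p*} where p and p* are antipodal elements of [a] × [b] × [ℓ], and let χ_S(f) = f(p) + f(p*). Then the triple (L_{([a]×[b])×[ℓ]}(R^{a+b}), Pro, χ_S) is (a+b+1)-mesic: the average of χ_S over every promotion orbit equals a+b+1. -/

import Mathlib

open scoped Classical

/-- `f ∈ L_{P×[ℓ]}(R^q)`: a `P`-strict labeling of `P × [ℓ]` with labels globally bounded
between `1` and `q`: strictly increasing on each layer (copy of `P`), weakly increasing
along each fiber (copy of `[ℓ]`), with labels in `{1,…,q}`. -/
def IsPStrict (P : Type*) [PartialOrder P] (ℓ q : ℕ) (f : P × Fin ℓ → ℤ) : Prop :=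
  (∀ (p p' : P) (i : Fin ℓ), p < p' → f (p, i) < f (p', i)) ∧
  (∀ (p : P) (i i' : Fin ℓ), i ≤ i' → f (p, i) ≤ f (p, i')) ∧
  (∀ p i, 1 ≤ f (p, i) ∧ f (p, i) ≤ (q : ℤ))

/-- A label `f(p,i)` is raisable if some `g ∈ L_{P×[ℓ]}(R^q)` has `g(p,i) > f(p,i)` and
agrees with `f` off the fiber of `p`. -/
def Raisable (P : Type*) [PartialOrder P] (ℓ q : ℕ) (f : P × Fin ℓ → ℤ)
    (p : P) (i : Fin ℓ) : Prop :=
  ∃ g, IsPStrict P ℓ q g ∧ f (p, i) < g (p, i) ∧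
    ∀ (p' : P) (i' : Fin ℓ), p' ≠ p → g (p', i') = f (p', i')

/-- A label `f(p,i)` is lowerable if some `g ∈ L_{P×[ℓ]}(R^q)` has `g(p,i) < f(p,i)` and
agrees with `f` off the fiber of `p`. -/
def Lowerable (P : Type*) [PartialOrder P] (ℓ q : ℕ) (f : P × Fin ℓ → ℤ)
    (p : P) (i : Fin ℓ) : Prop :=
  ∃ g, IsPStrict P ℓ q g ∧ g (p, i) < f (p, i) ∧
    ∀ (p' : P) (i' : Fin ℓ), p' ≠ p → g (p', i') = f (p', i')

/-- The `k`-th Bender–Knuth involution `ρ_k` on `P`-strict labelings with the global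
restriction function `R^q` (for which the next allowed label above `k` is `k+1`): in
each fiber, the free labels (`a` raisable `k`'s followed by `b` lowerable `(k+1)`'s)
are replaced by `b` `k`'s followed by `a` `(k+1)`'s: a free position gets the label `k`
precisely when its rank among the free positions of its fiber is at most the number of
free `(k+1)`'s. -/
noncomputable def bkP (P : Type*) [PartialOrder P] (ℓ q : ℕ) (k : ℤ)
    (f : P × Fin ℓ → ℤ) : P × Fin ℓ → ℤ :=
  fun pi =>
    let p := pi.1
    let freeK : Fin ℓ → Prop := fun z => f (p, z) = k ∧ Raisable P ℓ q f p z
    let freeK1 : Fin ℓ → Prop := fun z => f (p, z) = k + 1 ∧ Lowerable P ℓ q f p z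
    if freeK pi.2 ∨ freeK1 pi.2 then
      if (Finset.univ.filter (fun z : Fin ℓ => (freeK z ∨ freeK1 z) ∧ z ≤ pi.2)).card ≤
          (Finset.univ.filter (fun z : Fin ℓ => freeK1 z)).card
      then k else k + 1
    else f pi

/-- `P`-strict promotion `Pro = ρ_{q−1} ∘ ⋯ ∘ ρ_2 ∘ ρ_1` (so `ρ_1` is applied first). -/
noncomputable def proP (P : Type*) [PartialOrder P] (ℓ q : ℕ)
    (f : P × Fin ℓ → ℤ) : P × Fin ℓ → ℤ :=
  (List.range (q - 1)).foldl (fun g i => bkP P ℓ q ((i : ℤ) + 1) g) f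

/-!
The rectangle `[a] × [b]` is graded and its maximal chains have `a + b - 1` elements, so a
`P`-strict labeling with labels in `{1, …, a + b}` takes at most two values on the fiber of `p`,
both determined by the rank of `p`, and is encoded by the number `h p ∈ {0, …, ℓ}` of larger ones.
In this encoding `h` is order preserving, the Bender–Knuth involutions are the piecewise-linear
toggles of the ranks, and promotion is piecewise-linear rowmotion. The latter is the
tropicalization of birational rowmotion `ρ`: if `F x p` grows like `x ^ h p` as `x → ∞`, then
`ρ (F x) p` grows like `x` to the power of the piecewise-linear rowmotion of `h` at `p`.

Birational rowmotion on the rectangle with `1` below and `Q` above satisfies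
`ρ^[i + j + 1] F p* = Q / F p` at `p = (i, j)`, with coordinates counted from `0`. For `j = 0` this
is a statement on weighted sums over chains: `F p` is the sum over the chains from `⊥` to `p` for
the weights `downSlack F`, `Q / F p` is the sum over the chains from `p` to `⊤` for the weights
`upSlack Q F`, and `downSlack (ρ F) = upSlack Q F`. A matrix that intertwines the two families of
chain sums of `F` shifts both endpoints of the chains by one step along the edges of the rectangle,
at the price of one application of `ρ`. The other rows follow by induction from the toggle relation,
which determines a row from the two before it.

Taking growth orders with `Q = x ^ ℓ` gives `Pro^[i + j + 1] f p* = a + b + 1 - f p`, and summing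
over an orbit yields the average.
-/

section Covers

variable {P : Type*} [PartialOrder P] [Fintype P]

/-- The elements covered by `p`. -/
noncomputable def lowerCovers (p : P) : Finset P := {u | u ⋖ p}

/-- The elements covering `p`. -/
noncomputable def upperCovers (p : P) : Finset P := {u | p ⋖ u}

@[simp]
lemma mem_lowerCovers {p u : P} : u ∈ lowerCovers p ↔ u ⋖ p := by simp [lowerCovers]

@[simp]
lemma mem_upperCovers {p u : P} : u ∈ upperCovers p ↔ p ⋖ u := by simp [upperCovers]

lemma lowerCovers_nonempty_iff {p : P} : (lowerCovers p).Nonempty ↔ ¬IsMin p :=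
  ⟨fun ⟨_, hu⟩ hp => hp.not_lt (mem_lowerCovers.1 hu).lt, fun hp =>
    (exists_covBy_of_wellFoundedGT hp).imp fun _ => mem_lowerCovers.2⟩

lemma upperCovers_nonempty_iff {p : P} : (upperCovers p).Nonempty ↔ ¬IsMax p :=
  ⟨fun ⟨_, hu⟩ hp => hp.not_lt (mem_upperCovers.1 hu).lt, fun hp =>
    (exists_covBy_of_wellFoundedLT hp).imp fun _ => mem_upperCovers.2⟩

end Covers

lemma monotone_of_covBy {P α : Type*} [PartialOrder P] [Finite P] [Preorder α] {h : P → α}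
    (H : ∀ u v, u ⋖ v → h u ≤ h v) : Monotone h :=
  letI := Fintype.ofFinite P
  letI := Fintype.toLocallyFiniteOrder (α := P)
  (monotone_iff_forall_covBy h).2 H

/-- `r` is the rank function of a graded poset all of whose maximal chains have `q - 1` elements.
The top rank is then `q - 2`, so a `P`-strict labeling with labels in `{1, …, q}` has exactly one
unit of slack at every element. -/
structure IsRankFunction {P : Type*} [PartialOrder P] (r : P → ℕ) (q : ℕ) : Prop where
  covBy {u v : P} : u ⋖ v → r v = r u + 1
  isMin {u : P} : IsMin u → r u = 0
  isMax {u : P} : IsMax u → r u + 2 = q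

section Heights

variable {P : Type*} [PartialOrder P]

/-- Order-preserving maps `P → {0, …, ℓ}`, the integral points of the `ℓ`-th dilate of the order
polytope of `P`. They encode the `P`-strict labelings of `P × [ℓ]`, see `heightLabeling`. -/
structure IsHeight (ℓ : ℕ) (h : P → ℤ) : Prop where
  monotone : Monotone h
  nonneg (p : P) : 0 ≤ h p
  le (p : P) : h p ≤ ℓ

/-- The labeling of `P × [ℓ]` in which the first `ℓ - h p` labels of the fiber of `p` are
`r p + 1` and the last `h p` labels are `r p + 2`. -/
noncomputable def heightLabeling (r : P → ℕ) (ℓ : ℕ) (h : P → ℤ) (x : P × Fin ℓ) : ℤ :=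
  r x.1 + 1 + if (ℓ : ℤ) ≤ (x.2 : ℕ) + h x.1 then 1 else 0

variable [Fintype P]

/-- The largest value of `h` on the lower covers of `p`, and `0` if there are none. -/
noncomputable def lowerMax (h : P → ℤ) (p : P) : ℤ := (lowerCovers p).fold max 0 h

/-- The least value of `h` on the upper covers of `p`, and `ℓ` if there are none. -/
noncomputable def upperMin (ℓ : ℤ) (h : P → ℤ) (p : P) : ℤ := (upperCovers p).fold min ℓ h

variable {ℓ : ℕ} {h : P → ℤ}

lemma le_lowerMax {u p : P} (hup : u ⋖ p) : h u ≤ lowerMax h p :=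
  ((lowerCovers p).fold_max_le _).1 le_rfl |>.2 u (mem_lowerCovers.2 hup)

lemma upperMin_le {ℓ : ℤ} {u p : P} (hpu : p ⋖ u) : upperMin ℓ h p ≤ h u :=
  ((upperCovers p).le_fold_min _).1 le_rfl |>.2 u (mem_upperCovers.2 hpu)

lemma lowerMax_nonneg (h : P → ℤ) (p : P) : 0 ≤ lowerMax h p :=
  ((lowerCovers p).fold_max_le _).1 le_rfl |>.1

lemma upperMin_le_self (ℓ : ℤ) (h : P → ℤ) (p : P) : upperMin ℓ h p ≤ ℓ :=
  ((upperCovers p).le_fold_min _).1 le_rfl |>.1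

namespace IsHeight

lemma lowerMax_le (hh : IsHeight ℓ h) (p : P) : lowerMax h p ≤ h p :=
  ((lowerCovers p).fold_max_le _).2
    ⟨hh.nonneg p, fun _ hu => hh.monotone (mem_lowerCovers.1 hu).le⟩

lemma le_upperMin (hh : IsHeight ℓ h) (p : P) : h p ≤ upperMin ℓ h p :=
  ((upperCovers p).le_fold_min _).2
    ⟨hh.le p, fun _ hu => hh.monotone (mem_upperCovers.1 hu).le⟩

lemma modify {h' : P → ℤ} {s : P → Prop} (hh : IsHeight ℓ h)
    (hs : ∀ u v, s u → s v → ¬u ⋖ v) (hoff : ∀ p, ¬s p → h' p = h p)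
    (hon : ∀ p, s p → h' p ∈ Set.Icc (lowerMax h p) (upperMin ℓ h p)) : IsHeight ℓ h' where
  monotone := monotone_of_covBy fun u v huv => by
    by_cases hu : s u <;> by_cases hv : s v
    · exact (hs u v hu hv huv).elim
    · rw [hoff v hv]
      exact (hon u hu).2.trans (upperMin_le huv)
    · rw [hoff u hu]
      exact (le_lowerMax huv).trans (hon v hv).1
    · rw [hoff u hu, hoff v hv]
      exact hh.monotone huv.le
  nonneg p := by
    by_cases hp : s p
    · exact (lowerMax_nonneg h p).trans (hon p hp).1
    · exact hoff p hp ▸ hh.nonneg p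
  le p := by
    by_cases hp : s p
    · exact (hon p hp).2.trans (upperMin_le_self ℓ h p)
    · exact hoff p hp ▸ hh.le p

lemma update (hh : IsHeight ℓ h) (p : P) {m : ℤ}
    (hm : m ∈ Set.Icc (lowerMax h p) (upperMin ℓ h p)) : IsHeight ℓ (Function.update h p m) := by
  refine hh.modify (s := (· = p)) ?_ (fun u hu => Function.update_of_ne hu m h) ?_
  · rintro u v rfl rfl huv
    exact huv.ne rfl
  · rintro u rfl
    simpa using hm

end IsHeight

end Heights

section Labelings

variable {P : Type*} [PartialOrder P] [Finite P] {r : P → ℕ} {q ℓ : ℕ} {h : P → ℤ}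
  {f : P × Fin ℓ → ℤ}

namespace IsPStrict

lemma rank_add_one_le (hr : IsRankFunction r q) (hf : IsPStrict P ℓ q f) (p : P) (z : Fin ℓ) :
    (r p : ℤ) + 1 ≤ f (p, z) := by
  induction p using WellFoundedLT.induction with
  | ind p ih =>
    by_cases hp : IsMin p
    · simpa [hr.isMin hp] using (hf.2.2 p z).1
    · obtain ⟨u, hu⟩ := exists_covBy_of_wellFoundedGT hp
      have := ih u hu.lt
      have := hf.1 u p z hu.lt
      have := hr.covBy hu
      lia

lemma le_rank_add_two (hr : IsRankFunction r q) (hf : IsPStrict P ℓ q f) (p : P) (z : Fin ℓ) :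
    f (p, z) ≤ r p + 2 := by
  induction p using WellFoundedGT.induction with
  | ind p ih =>
    by_cases hp : IsMax p
    · exact_mod_cast hr.isMax hp ▸ (hf.2.2 p z).2
    · obtain ⟨u, hu⟩ := exists_covBy_of_wellFoundedLT hp
      have := ih u hu.lt
      have := hf.1 p u z hu.lt
      have := hr.covBy hu
      lia

end IsPStrict

namespace IsRankFunction

lemma strictMono (hr : IsRankFunction r q) : StrictMono r :=
  letI := Fintype.ofFinite P
  letI := Fintype.toLocallyFiniteOrder (α := P)
  (strictMono_iff_forall_covBy r).2 fun u v huv => by simp [hr.covBy huv]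

lemma add_two_le (hr : IsRankFunction r q) (p : P) : r p + 2 ≤ q := by
  obtain ⟨u, hpu, hu⟩ := (Set.finite_univ (α := P)).exists_le_maximal (Set.mem_univ p)
  have := hr.isMax (isMax_iff_forall_not_lt.2 fun v => hu.not_gt trivial)
  have := hr.strictMono.monotone hpu
  lia

end IsRankFunction

lemma IsHeight.isPStrict_heightLabeling (hh : IsHeight ℓ h) (hr : IsRankFunction r q) :
    IsPStrict P ℓ q (heightLabeling r ℓ h) := by
  refine ⟨fun u v z huv => ?_, fun p z z' hzz' => ?_, fun p z => ?_⟩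
  · have := hr.strictMono huv
    have := hh.monotone huv.le
    grind [heightLabeling]
  · grind [heightLabeling]
  · have := hr.add_two_le p
    grind [heightLabeling]

lemma mem_iff_le_add_card_of_isUpperSet {s : Finset (Fin ℓ)} (hs : IsUpperSet (s : Set (Fin ℓ)))
    (z : Fin ℓ) : z ∈ s ↔ ℓ ≤ z + s.card := by
  constructor
  · intro hz
    have : Finset.Ici z ⊆ s := fun z' hz' => hs (Finset.mem_Ici.1 hz') hz
    have := Finset.card_le_card this
    rw [Fin.card_Ici] at this
    lia
  · contrapose!
    intro hz
    have : s ⊆ Finset.Ioi z := fun z' hz' =>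
      Finset.mem_Ioi.2 (lt_of_not_ge fun hle => hz (hs hle hz'))
    have := Finset.card_le_card this
    rw [Fin.card_Ioi] at this
    lia

lemma IsPStrict.exists_heightLabeling_eq (hf : IsPStrict P ℓ q f) (hr : IsRankFunction r q) :
    ∃ h, IsHeight ℓ h ∧ heightLabeling r ℓ h = f := by
  let top (p : P) : Finset (Fin ℓ) := {z | f (p, z) = r p + 2}
  have lower := hf.rank_add_one_le hr
  have upper := hf.le_rank_add_two hr
  have top_upper (p : P) : IsUpperSet (top p : Set (Fin ℓ)) := fun z z' hzz' hz => by
    have := hf.2.1 p z z' hzz'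
    grind
  have top_mono (u v : P) (huv : u ⋖ v) : top u ⊆ top v := fun z hz => by
    have := hf.1 u v z huv.lt
    have := hr.covBy huv
    grind
  refine ⟨fun p => (top p).card, ⟨?_, fun p => by positivity, fun p => ?_⟩, ?_⟩
  · exact monotone_of_covBy fun u v huv => mod_cast Finset.card_le_card (top_mono u v huv)
  · simpa using (top p).card_le_univ
  · ext ⟨p, z⟩
    have := mem_iff_le_add_card_of_isUpperSet (top_upper p) z
    grind [heightLabeling]

end Labelings

-- The list in `proP` is elaborated as a `List ℤ`, the monadic cast of `List.range (q - 1)`.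
lemma proP_eq_foldl {P : Type*} [PartialOrder P] {ℓ q : ℕ} (f : P × Fin ℓ → ℤ) :
    proP P ℓ q f = (List.range (q - 1)).foldl (fun g (k : ℕ) => bkP P ℓ q (k + 1) g) f := by
  simp [proP, List.foldl_flatMap]

section BenderKnuth

variable {P : Type*} [PartialOrder P] [Fintype P] {r : P → ℕ} {q ℓ : ℕ} {h : P → ℤ}

/-- The piecewise-linear toggle of all elements of rank `k`. -/
noncomputable def plToggle (r : P → ℕ) (ℓ : ℤ) (k : ℕ) (h : P → ℤ) (p : P) : ℤ :=
  if r p = k then lowerMax h p + upperMin ℓ h p - h p else h p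

/-- Piecewise-linear rowmotion, which toggles the ranks `0, 1, …, q - 2` in this order. -/
noncomputable def plRowmotion (r : P → ℕ) (q : ℕ) (ℓ : ℤ) (h : P → ℤ) : P → ℤ :=
  (List.range (q - 1)).foldl (fun g k => plToggle r ℓ k g) h

lemma isHeight_plToggle (hh : IsHeight ℓ h) (hr : IsRankFunction r q) (k : ℕ) :
    IsHeight ℓ (plToggle r ℓ k h) := by
  refine hh.modify (s := (r · = k)) (fun u v hu hv huv => ?_) (fun p hp => if_neg hp)
    (fun p hp => ?_)
  · have := hr.covBy huv
    lia
  · rw [plToggle, if_pos hp]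
    have := hh.lowerMax_le p
    have := hh.le_upperMin p
    constructor <;> lia

lemma IsHeight.raisable_heightLabeling_iff (hh : IsHeight ℓ h) (hr : IsRankFunction r q) (p : P)
    (z : Fin ℓ) : Raisable P ℓ q (heightLabeling r ℓ h) p z ↔
      (z : ℕ) + h p < ℓ ∧ ℓ ≤ (z : ℕ) + upperMin ℓ h p := by
  constructor
  · rintro ⟨g, hg, hlt, hoff⟩
    have hgp := hg.le_rank_add_two hr p z
    refine ⟨by grind [heightLabeling], ?_⟩
    rw [← sub_le_iff_le_add', upperMin, Finset.le_fold_min]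
    refine ⟨by lia, fun u hu => ?_⟩
    rw [mem_upperCovers] at hu
    have := hg.1 p u z hu.lt
    have := hr.covBy hu
    have := hoff u z hu.ne'
    grind [heightLabeling]
  · rintro ⟨hlt, hle⟩
    have hup := hh.update p ⟨(hh.lowerMax_le p).trans (hh.le_upperMin p), le_rfl⟩
    refine ⟨_, hup.isPStrict_heightLabeling hr, ?_, fun u i hu => ?_⟩
    · simp [heightLabeling, hle, hlt.not_ge]
    · simp [heightLabeling, hu]

lemma IsHeight.lowerable_heightLabeling_iff (hh : IsHeight ℓ h) (hr : IsRankFunction r q) (p : P)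
    (z : Fin ℓ) : Lowerable P ℓ q (heightLabeling r ℓ h) p z ↔
      ℓ ≤ (z : ℕ) + h p ∧ (z : ℕ) + lowerMax h p < ℓ := by
  constructor
  · rintro ⟨g, hg, hlt, hoff⟩
    have hgp := hg.rank_add_one_le hr p z
    refine ⟨by grind [heightLabeling], ?_⟩
    rw [← lt_sub_iff_add_lt', lowerMax, Finset.fold_max_lt]
    refine ⟨by simp, fun u hu => ?_⟩
    rw [mem_lowerCovers] at hu
    have := hg.1 u p z hu.lt
    have := hr.covBy hu
    have := hoff u z hu.ne
    grind [heightLabeling]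
  · rintro ⟨hle, hlt⟩
    have hlow := hh.update p ⟨le_rfl, (hh.lowerMax_le p).trans (hh.le_upperMin p)⟩
    refine ⟨_, hlow.isPStrict_heightLabeling hr, ?_, fun u i hu => ?_⟩
    · simp [heightLabeling, hle, hlt.not_ge]
    · simp [heightLabeling, hu]

namespace IsHeight

lemma heightLabeling_eq_and_raisable_iff (hh : IsHeight ℓ h) (hr : IsRankFunction r q) (k : ℕ)
    (p : P) (z : Fin ℓ) :
    (heightLabeling r ℓ h (p, z) = k + 1 ∧ Raisable P ℓ q (heightLabeling r ℓ h) p z) ↔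
      r p = k ∧ ℓ - upperMin ℓ h p ≤ (z : ℕ) ∧ (z : ℕ) < ℓ - h p := by
  rw [hh.raisable_heightLabeling_iff hr]
  grind [heightLabeling]

lemma heightLabeling_eq_and_lowerable_iff (hh : IsHeight ℓ h) (hr : IsRankFunction r q) (k : ℕ)
    (p : P) (z : Fin ℓ) :
    (heightLabeling r ℓ h (p, z) = k + 1 + 1 ∧ Lowerable P ℓ q (heightLabeling r ℓ h) p z) ↔
      r p = k ∧ ℓ - h p ≤ (z : ℕ) ∧ (z : ℕ) < ℓ - lowerMax h p := by
  rw [hh.lowerable_heightLabeling_iff hr]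
  grind [heightLabeling]

end IsHeight

lemma card_filter_fin_eq_sub {s : Fin ℓ → Prop} [DecidablePred s] (m n : ℤ) (hm : 0 ≤ m)
    (hmn : m ≤ n) (hn : n ≤ ℓ) (hs : ∀ z, s z ↔ m ≤ (z : ℕ) ∧ (z : ℕ) < n) :
    (Finset.card {z | s z} : ℤ) = n - m := by
  lift m to ℕ using hm
  lift n to ℕ using by lia
  have : ({z | s z} : Finset (Fin ℓ)).map Fin.valEmbedding = Finset.Ico m n := by
    ext i
    simp only [Finset.mem_map, Finset.mem_filter_univ, hs, Fin.valEmbedding_apply, Finset.mem_Ico]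
    exact ⟨by lia, fun hi => ⟨⟨i, by lia⟩, by lia⟩⟩
  rw [← Finset.card_map, this, Nat.card_Ico]
  lia

lemma IsHeight.bkP_heightLabeling (hh : IsHeight ℓ h) (hr : IsRankFunction r q) (k : ℕ) :
    bkP P ℓ q (k + 1) (heightLabeling r ℓ h) = heightLabeling r ℓ (plToggle r ℓ k h) := by
  ext ⟨p, z⟩
  simp only [bkP, hh.heightLabeling_eq_and_raisable_iff hr,
    hh.heightLabeling_eq_and_lowerable_iff hr]
  by_cases hp : r p = k
  · simp only [hp, true_and]
    have := lowerMax_nonneg h p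
    have := hh.lowerMax_le p
    have := hh.le_upperMin p
    have := upperMin_le_self (ℓ : ℤ) h p
    have card_lowerable : (Finset.card {z : Fin ℓ | (ℓ : ℤ) - h p ≤ (z : ℕ) ∧
        (z : ℕ) < ℓ - lowerMax h p} : ℤ) = (ℓ - lowerMax h p) - (ℓ - h p) :=
      card_filter_fin_eq_sub _ _ (by lia) (by lia) (by lia) fun _ => Iff.rfl
    have card_free_le (hz : (ℓ : ℤ) - upperMin ℓ h p ≤ (z : ℕ) ∧ (z : ℕ) < ℓ - lowerMax h p) :
        (Finset.card {z' : Fin ℓ | (ℓ - upperMin ℓ h p ≤ (z' : ℕ) ∧ (z' : ℕ) < ℓ - h p ∨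
          ℓ - h p ≤ (z' : ℕ) ∧ (z' : ℕ) < ℓ - lowerMax h p) ∧ z' ≤ z} : ℤ) =
          (z + 1) - (ℓ - upperMin ℓ h p) :=
      card_filter_fin_eq_sub _ _ (by lia) (by lia) (by lia) fun z' => by grind
    grind [heightLabeling, plToggle]
  · simp [hp, heightLabeling, plToggle]

lemma isHeight_plRowmotion (hh : IsHeight ℓ h) (hr : IsRankFunction r q) :
    IsHeight ℓ (plRowmotion r q ℓ h) := by
  rw [plRowmotion]
  induction List.range (q - 1) generalizing h with
  | nil => exact hh
  | cons k _ ih => exact ih (isHeight_plToggle hh hr k)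

lemma IsHeight.proP_heightLabeling (hh : IsHeight ℓ h) (hr : IsRankFunction r q) :
    proP P ℓ q (heightLabeling r ℓ h) = heightLabeling r ℓ (plRowmotion r q ℓ h) := by
  rw [proP_eq_foldl, plRowmotion]
  induction List.range (q - 1) generalizing h with
  | nil => rfl
  | cons k l ih =>
    rw [List.foldl_cons, List.foldl_cons, hh.bkP_heightLabeling hr, ih (isHeight_plToggle hh hr k)]

lemma IsHeight.proP_iterate_heightLabeling (hh : IsHeight ℓ h) (hr : IsRankFunction r q) (t : ℕ) :
    (proP P ℓ q)^[t] (heightLabeling r ℓ h) = heightLabeling r ℓ ((plRowmotion r q ℓ)^[t] h) := by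
  induction t generalizing h with
  | zero => rfl
  | succ t ih =>
    rw [Function.iterate_succ_apply, Function.iterate_succ_apply, hh.proP_heightLabeling hr,
      ih (isHeight_plRowmotion hh hr)]

end BenderKnuth

section BirationalRowmotion

variable {P K : Type*} [PartialOrder P] [Fintype P] [Field K] {r : P → ℕ} {q : ℕ} {Q : K}
  {F G : P → K}

/-- The sum of `F` over the elements covered by `p` in `P` with a bottom element of value `1`
adjoined. -/
noncomputable def lowerSum (F : P → K) (p : P) : K :=
  ∑ u ∈ lowerCovers p, F u + if IsMin p then 1 else 0

/-- The sum of `1 / F` over the elements covering `p` in `P` with a top element of value `Q`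
adjoined. -/
noncomputable def upperSum (Q : K) (F : P → K) (p : P) : K :=
  ∑ u ∈ upperCovers p, (F u)⁻¹ + if IsMax p then Q⁻¹ else 0

/-- The birational toggle of all elements of rank `k`. -/
noncomputable def birToggle (r : P → ℕ) (Q : K) (k : ℕ) (F : P → K) (p : P) : K :=
  if r p = k then lowerSum F p / (F p * upperSum Q F p) else F p

/-- Birational rowmotion, which toggles the ranks `0, 1, …, q - 2` in this order. -/
noncomputable def birRowmotion (r : P → ℕ) (q : ℕ) (Q : K) (F : P → K) : P → K :=
  (List.range (q - 1)).foldl (fun G k => birToggle r Q k G) F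

/-- `G` is the image of `F` under birational rowmotion, in the form of the recursion that computes
`G` from the bottom of `P` to its top. -/
def IsRowmotionStep (Q : K) (F G : P → K) : Prop :=
  ∀ p, G p = lowerSum G p / (F p * upperSum Q F p)

lemma lowerSum_congr {p : P} (H : ∀ u, u ⋖ p → F u = G u) : lowerSum F p = lowerSum G p := by
  rw [lowerSum, lowerSum, Finset.sum_congr rfl fun u hu => H u (mem_lowerCovers.1 hu)]

lemma upperSum_congr {p : P} (H : ∀ u, p ⋖ u → F u = G u) : upperSum Q F p = upperSum Q G p := by
  rw [upperSum, upperSum,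
    Finset.sum_congr rfl fun u hu => congrArg _ (H u (mem_upperCovers.1 hu))]

lemma IsRankFunction.isRowmotionStep_birRowmotion (hr : IsRankFunction r q) (Q : K) (F : P → K) :
    IsRowmotionStep Q F (birRowmotion r q Q F) := by
  suffices ∀ k, let G := (List.range k).foldl (fun G k => birToggle r Q k G) F
      (∀ p, k ≤ r p → G p = F p) ∧
      ∀ p, r p < k → G p = lowerSum G p / (F p * upperSum Q F p) from
    fun p => (this (q - 1)).2 p (by have := hr.add_two_le p; lia)
  intro k
  induction k with
  | zero => simp
  | succ k ih =>
    rw [List.range_succ, List.foldl_append, List.foldl_cons, List.foldl_nil]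
    obtain ⟨high, low⟩ := ih
    generalize (List.range k).foldl (fun G k => birToggle r Q k G) F = G at high low
    have off {p : P} (hp : r p ≠ k) : birToggle r Q k G p = G p := if_neg hp
    have lowerSum_eq {p : P} (hp : r p ≤ k) : lowerSum (birToggle r Q k G) p = lowerSum G p :=
      lowerSum_congr fun u hu => off (by have := hr.covBy hu; lia)
    refine ⟨fun p hp => (off (by lia)).trans (high p (by lia)), fun p hp => ?_⟩
    rw [lowerSum_eq (by lia)]
    by_cases hpk : r p = k
    · have upperSum_eq : upperSum Q G p = upperSum Q F p :=
        upperSum_congr fun u hu => high u (by have := hr.covBy hu; lia)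
      rw [birToggle, if_pos hpk, upperSum_eq, high p hpk.ge]
    · rw [off hpk, low p (by lia)]

section Positivity

variable [LinearOrder K] [IsStrictOrderedRing K]

lemma lowerSum_pos (hF : ∀ p, 0 < F p) (p : P) : 0 < lowerSum F p := by
  by_cases hp : IsMin p
  · simpa [lowerSum, hp] using add_pos_of_nonneg_of_pos (Finset.sum_nonneg fun u _ => (hF u).le)
      one_pos
  · simpa [lowerSum, hp] using Finset.sum_pos (fun u _ => hF u) (lowerCovers_nonempty_iff.2 hp)

lemma upperSum_pos (hQ : 0 < Q) (hF : ∀ p, 0 < F p) (p : P) : 0 < upperSum Q F p := by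
  have hF' (u : P) : 0 < (F u)⁻¹ := inv_pos.2 (hF u)
  by_cases hp : IsMax p
  · simpa [upperSum, hp] using add_pos_of_nonneg_of_pos (Finset.sum_nonneg fun u _ => (hF' u).le)
      (inv_pos.2 hQ)
  · simpa [upperSum, hp] using Finset.sum_pos (fun u _ => hF' u) (upperCovers_nonempty_iff.2 hp)

lemma birToggle_pos (hQ : 0 < Q) (hF : ∀ p, 0 < F p) (k : ℕ) (p : P) :
    0 < birToggle r Q k F p := by
  rw [birToggle]
  split_ifs
  · exact div_pos (lowerSum_pos hF p) (mul_pos (hF p) (upperSum_pos hQ hF p))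
  · exact hF p

lemma birRowmotion_pos (hQ : 0 < Q) (hF : ∀ p, 0 < F p) : ∀ p, 0 < birRowmotion r q Q F p := by
  rw [birRowmotion]
  induction List.range (q - 1) generalizing F with
  | nil => exact hF
  | cons k _ ih => exact ih (birToggle_pos hQ hF k)

lemma birRowmotion_iterate_pos (hQ : 0 < Q) (hF : ∀ p, 0 < F p) (t : ℕ) :
    ∀ p, 0 < (birRowmotion r q Q)^[t] F p := by
  induction t generalizing F with
  | zero => exact hF
  | succ _ ih => exact ih (birRowmotion_pos hQ hF)

end Positivity

end BirationalRowmotion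

section PathMatrix

open Matrix

lemma isUnit_one_sub_of_rank_lt {ι R : Type*} [Fintype ι] [DecidableEq ι] [CommRing R]
    {M : Matrix ι ι R} (r : ι → ℕ) (hM : ∀ u v, M u v ≠ 0 → r v < r u) : IsUnit (1 - M) := by
  have pow_apply_ne_zero (n : ℕ) : ∀ u v, (M ^ n) u v ≠ 0 → r v + n ≤ r u := by
    induction n with
    | zero =>
      intro u v huv
      obtain rfl : u = v := by_contra fun hne => huv (by simp [hne])
      rfl
    | succ n ih =>
      intro u v huv
      rw [pow_succ', mul_apply] at huv
      obtain ⟨w, -, hw⟩ := Finset.exists_ne_zero_of_sum_ne_zero huv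
      have := hM u w (left_ne_zero_of_mul hw)
      have := ih w v (right_ne_zero_of_mul hw)
      lia
  have pow_eq_zero : M ^ (Finset.univ.sup r + 1) = 0 := by
    ext u v
    by_contra huv
    have := pow_apply_ne_zero _ u v huv
    have := Finset.le_sup (f := r) (Finset.mem_univ u)
    lia
  exact IsNilpotent.isUnit_one_sub ⟨_, pow_eq_zero⟩

lemma inv_mul_eq_mul_inv_of_semiconj {ι R : Type*} [Fintype ι] [DecidableEq ι] [CommRing R]
    {M N W : Matrix ι ι R} (hM : IsUnit M) (hN : IsUnit N) (h : M * W = W * N) :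
    M⁻¹ * W = W * N⁻¹ := by
  rw [isUnit_iff_isUnit_det] at hM hN
  calc M⁻¹ * W = M⁻¹ * (W * N) * N⁻¹ := by
        rw [← Matrix.mul_assoc, mul_nonsing_inv_cancel_right _ _ hN]
    _ = W * N⁻¹ := by rw [← h, nonsing_inv_mul_cancel_left _ _ hM]

variable {P K : Type*} [PartialOrder P] [Fintype P] [Field K] {r : P → ℕ} {q : ℕ}
  {Q : K} {F G : P → K}

/-- The matrix of the covering relation, with an entry `1` at `(u, v)` if `u` covers `v`. -/
noncomputable def coverMatrix (P K : Type*) [PartialOrder P] [Field K] : Matrix P P K :=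
  of fun u v => if v ⋖ u then 1 else 0

lemma coverMatrix_mulVec (φ : P → K) (u : P) :
    (coverMatrix P K *ᵥ φ) u = ∑ v ∈ lowerCovers u, φ v := by
  simp [coverMatrix, mulVec, dotProduct, lowerCovers, Finset.sum_filter]

lemma vecMul_coverMatrix (φ : P → K) (v : P) :
    (φ ᵥ* coverMatrix P K) v = ∑ u ∈ upperCovers v, φ u := by
  simp [coverMatrix, vecMul, dotProduct, upperCovers, Finset.sum_filter]

/-- The chain weights built from lower sums, for which the chains from `⊥` to `p` sum up to
`F p`. -/
noncomputable def downSlack (F : P → K) (p : P) : K := F p / lowerSum F p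

/-- The chain weights built from upper sums, for which the chains from `p` to `⊤` sum up to
`Q / F p`. -/
noncomputable def upSlack (Q : K) (F : P → K) (p : P) : K := (F p * upperSum Q F p)⁻¹

lemma IsRowmotionStep.downSlack_eq [LinearOrder K] [IsStrictOrderedRing K]
    (h : IsRowmotionStep Q F G) (hG : ∀ p, 0 < G p) :
    downSlack G = upSlack Q F := by
  ext p
  have := lowerSum_pos hG p
  rw [downSlack, upSlack, h p]
  field_simp

variable [DecidableEq P]

/-- The matrix whose `(u, v)` entry is the sum of `∏ w ∈ C, c w` over the saturated chains `C` from
`v` to `u`, written as the geometric series `∑ n, (diagonal c * coverMatrix P K) ^ n * diagonal c`.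
-/
noncomputable def pathMatrix (c : P → K) : Matrix P P K :=
  (1 - diagonal c * coverMatrix P K)⁻¹ * diagonal c

lemma IsRankFunction.isUnit_one_sub_diagonal_mul_coverMatrix (hr : IsRankFunction r q) (c : P → K) :
    IsUnit (1 - diagonal c * coverMatrix P K) :=
  isUnit_one_sub_of_rank_lt r fun u v huv => by
    have : v ⋖ u := by by_contra h; simp [coverMatrix, h] at huv
    simp [hr.covBy this]

lemma IsRankFunction.isUnit_one_sub_coverMatrix_mul_diagonal (hr : IsRankFunction r q) (c : P → K) :
    IsUnit (1 - coverMatrix P K * diagonal c) :=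
  isUnit_one_sub_of_rank_lt r fun u v huv => by
    have : v ⋖ u := by by_contra h; simp [coverMatrix, h] at huv
    simp [hr.covBy this]

lemma IsRankFunction.pathMatrix_eq_diagonal_mul_inv (hr : IsRankFunction r q) (c : P → K) :
    pathMatrix c = diagonal c * (1 - coverMatrix P K * diagonal c)⁻¹ :=
  inv_mul_eq_mul_inv_of_semiconj (hr.isUnit_one_sub_diagonal_mul_coverMatrix c)
    (hr.isUnit_one_sub_coverMatrix_mul_diagonal c) (by noncomm_ring)

variable [LinearOrder K] [IsStrictOrderedRing K]

lemma IsRankFunction.pathMatrix_downSlack_bot [OrderBot P] (hr : IsRankFunction r q)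
    (hF : ∀ p, 0 < F p) (p : P) : pathMatrix (downSlack F) p ⊥ = F p := by
  have unit := hr.isUnit_one_sub_diagonal_mul_coverMatrix (downSlack F)
  have key : (1 - diagonal (downSlack F) * coverMatrix P K) *ᵥ F =
      diagonal (downSlack F) *ᵥ Pi.single ⊥ 1 := by
    ext u
    have lowerSum_ne := (lowerSum_pos hF u).ne'
    have lowerSum_eq : lowerSum F u =
        ∑ v ∈ lowerCovers u, F v + Pi.single (M := fun _ => K) ⊥ 1 u := by
      simp [lowerSum, Pi.single_apply, isMin_iff_eq_bot]
    rw [sub_mulVec, one_mulVec, ← mulVec_mulVec, Pi.sub_apply, mulVec_diagonal, mulVec_diagonal,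
      coverMatrix_mulVec, sub_eq_iff_eq_add', ← mul_add, ← lowerSum_eq, downSlack,
      div_mul_cancel₀ _ lowerSum_ne]
  have solve : F = pathMatrix (downSlack F) *ᵥ Pi.single ⊥ 1 := by
    rw [pathMatrix, ← mulVec_mulVec, ← key, mulVec_mulVec,
      nonsing_inv_mul _ ((isUnit_iff_isUnit_det _).1 unit), one_mulVec]
  rw [mulVec_single_one] at solve
  exact (congrFun solve p).symm

lemma IsRankFunction.pathMatrix_upSlack_top [OrderTop P] (hr : IsRankFunction r q) (hQ : 0 < Q)
    (hF : ∀ p, 0 < F p) (p : P) : pathMatrix (upSlack Q F) ⊤ p = Q / F p := by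
  have unit := hr.isUnit_one_sub_coverMatrix_mul_diagonal (upSlack Q F)
  have key : (fun p => Q / F p) ᵥ* (1 - coverMatrix P K * diagonal (upSlack Q F)) =
      Pi.single ⊤ 1 ᵥ* diagonal (upSlack Q F) := by
    ext v
    have upperSum_ne := (upperSum_pos hQ hF v).ne'
    have F_ne := (hF v).ne'
    have upperSum_eq : Q * upperSum Q F v =
        ∑ u ∈ upperCovers v, Q / F u + Pi.single (M := fun _ => K) ⊤ 1 v := by
      simp [upperSum, Pi.single_apply, isMax_iff_eq_top, mul_add, Finset.mul_sum, hQ.ne',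
        div_eq_mul_inv]
    rw [vecMul_sub, vecMul_one, ← vecMul_vecMul, Pi.sub_apply, vecMul_diagonal, vecMul_diagonal,
      vecMul_coverMatrix, sub_eq_iff_eq_add', ← add_mul, ← upperSum_eq, upSlack]
    field_simp
  have solve : (fun p => Q / F p) = Pi.single ⊤ 1 ᵥ* pathMatrix (upSlack Q F) := by
    rw [hr.pathMatrix_eq_diagonal_mul_inv, ← vecMul_vecMul, ← key, vecMul_vecMul,
      mul_nonsing_inv _ ((isUnit_iff_isUnit_det _).1 unit), vecMul_one]
  rw [single_one_vecMul] at solve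
  exact (congrFun solve p).symm

end PathMatrix

section Rectangle

variable {a b : ℕ} {K : Type*} [Field K]

/-- The rank function `(i, j) ↦ i + j` of a rectangle, with `0`-based coordinates. -/
def rectRank (p : Fin (a + 1) × Fin (b + 1)) : ℕ := p.1 + p.2

lemma rect_covBy_iff {u v : Fin (a + 1) × Fin (b + 1)} :
    u ⋖ v ↔ (u.1 : ℕ) + 1 = v.1 ∧ (u.2 : ℕ) = v.2 ∨ (u.1 : ℕ) = v.1 ∧ (u.2 : ℕ) + 1 = v.2 := by
  simp only [Prod.covBy_iff, Fin.covBy_iff, Nat.covBy_iff_add_one_eq, Fin.ext_iff]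
  tauto

lemma isRankFunction_rectRank :
    IsRankFunction (rectRank (a := a) (b := b)) (a + 1 + (b + 1)) where
  covBy huv := by
    rw [rect_covBy_iff] at huv
    simp only [rectRank]
    lia
  isMin hu := by simp [isMin_iff_eq_bot.1 hu, rectRank, bot_eq_zero]
  isMax hu := by
    simp only [isMax_iff_eq_top.1 hu, rectRank, Prod.fst_top, Prod.snd_top, Fin.top_eq_last,
      Fin.val_last]
    lia

/-- The extension of `φ` by `0` from the rectangle to `ℤ × ℤ`. -/
def rectExt (φ : Fin (a + 1) × Fin (b + 1) → K) (i j : ℤ) : K :=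
  ∑ p, if (p.1 : ℕ) = i ∧ (p.2 : ℕ) = j then φ p else 0

variable {φ : Fin (a + 1) × Fin (b + 1) → K} {p : Fin (a + 1) × Fin (b + 1)} {i j : ℤ}

lemma rectExt_eq (hi : (p.1 : ℕ) = i) (hj : (p.2 : ℕ) = j) : rectExt φ i j = φ p := by
  rw [rectExt, Finset.sum_eq_single p, if_pos ⟨hi, hj⟩]
  · intro u _ hup
    exact if_neg fun hu => hup (Prod.ext (Fin.ext (by lia)) (Fin.ext (by lia)))
  · simp

lemma rectExt_eq_zero (h : ¬(0 ≤ i ∧ i ≤ a ∧ 0 ≤ j ∧ j ≤ b)) : rectExt φ i j = 0 :=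
  Finset.sum_eq_zero fun p _ => if_neg (by have := p.1.isLt; have := p.2.isLt; lia)

lemma rectExt_inv : rectExt (fun p => (φ p)⁻¹) i j = (rectExt φ i j)⁻¹ := by
  by_cases h : 0 ≤ i ∧ i ≤ a ∧ 0 ≤ j ∧ j ≤ b
  · lift i to ℕ using h.1
    lift j to ℕ using h.2.2.1
    let p : Fin (a + 1) × Fin (b + 1) := (⟨i, by lia⟩, ⟨j, by lia⟩)
    rw [rectExt_eq (p := p) rfl rfl, rectExt_eq (p := p) rfl rfl]
  · rw [rectExt_eq_zero h, rectExt_eq_zero h, _root_.inv_zero]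

lemma sum_lowerCovers_rect :
    ∑ u ∈ lowerCovers p, φ u = rectExt φ (p.1 - 1) p.2 + rectExt φ p.1 (p.2 - 1) := by
  simp only [lowerCovers, Finset.sum_filter, rectExt, ← Finset.sum_add_distrib]
  refine Finset.sum_congr rfl fun u _ => ?_
  rw [rect_covBy_iff]
  grind

lemma sum_upperCovers_rect :
    ∑ u ∈ upperCovers p, φ u = rectExt φ (p.1 + 1) p.2 + rectExt φ p.1 (p.2 + 1) := by
  simp only [upperCovers, Finset.sum_filter, rectExt, ← Finset.sum_add_distrib]
  refine Finset.sum_congr rfl fun u _ => ?_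
  rw [rect_covBy_iff]
  grind

end Rectangle

section JumpMatrix

open Matrix

variable {a b : ℕ} {K : Type*} [Field K] {Q : K} {F : Fin (a + 1) × Fin (b + 1) → K}
  {u v : Fin (a + 1) × Fin (b + 1)}

/-- `u` lies one rank above `v` and strictly to its right, where the first coordinate increases to
the right. -/
def IsRightAbove (u v : Fin (a + 1) × Fin (b + 1)) : Prop :=
  rectRank u = rectRank v + 1 ∧ v.1 < u.1

/-- The matrix that intertwines the path matrices for the weights `downSlack F` and `upSlack Q F`,
see `diagonal_mul_coverMatrix_mul_jumpMatrix`. -/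
noncomputable def jumpMatrix (F : Fin (a + 1) × Fin (b + 1) → K) :
    Matrix (Fin (a + 1) × Fin (b + 1)) (Fin (a + 1) × Fin (b + 1)) K :=
  of fun u v => if IsRightAbove u v then F u / F v else 0

-- `(v.1, u.2)` and `(u.1, v.2)` are the two elements strictly between `v` and `u`.
lemma upperSum_mul_eq_lowerSum_div (hF : ∀ p, F p ≠ 0) (h₁ : (v.1 : ℕ) + 1 = u.1)
    (h₂ : (v.2 : ℕ) + 1 = u.2) :
    upperSum Q F v * F (u.1, v.2) = lowerSum F u / F (v.1, u.2) := by
  have hne : (u.1, v.2) ≠ (v.1, u.2) := by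
    rw [Ne, Prod.ext_iff, Fin.ext_iff]
    lia
  have lowerCovers_eq : lowerCovers u = {(u.1, v.2), (v.1, u.2)} := by
    ext s
    simp only [mem_lowerCovers, rect_covBy_iff, Finset.mem_insert, Finset.mem_singleton,
      Prod.ext_iff, Fin.ext_iff]
    lia
  have upperCovers_eq : upperCovers v = {(u.1, v.2), (v.1, u.2)} := by
    ext s
    simp only [mem_upperCovers, rect_covBy_iff, Finset.mem_insert, Finset.mem_singleton,
      Prod.ext_iff, Fin.ext_iff]
    lia
  have hmin : ¬IsMin u := lowerCovers_nonempty_iff.1 (by simp [lowerCovers_eq])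
  have hmax : ¬IsMax v := upperCovers_nonempty_iff.1 (by simp [upperCovers_eq])
  have := hF (u.1, v.2)
  have := hF (v.1, u.2)
  rw [upperSum, lowerSum, if_neg hmin, if_neg hmax, lowerCovers_eq, upperCovers_eq,
    Finset.sum_pair hne, Finset.sum_pair hne]
  field_simp
  ring

lemma upperSum_mul_sum_lowerCovers (hF : ∀ p, F p ≠ 0) (u v : Fin (a + 1) × Fin (b + 1)) :
    upperSum Q F v * ∑ s ∈ lowerCovers u, (if IsRightAbove s v then F s else 0) =
      lowerSum F u * ∑ s ∈ upperCovers v, (if IsRightAbove u s then (F s)⁻¹ else 0) := by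
  obtain far | near | not_right :
      (u.1 : ℕ) + u.2 = v.1 + v.2 + 2 ∧ (v.1 : ℕ) + 1 < u.1 ∨
      (v.1 : ℕ) + 1 = u.1 ∧ (v.2 : ℕ) + 1 = u.2 ∨
      ¬((u.1 : ℕ) + u.2 = v.1 + v.2 + 2 ∧ (v.1 : ℕ) < u.1) := by lia
  · have hmin : ¬IsMin u := fun h => by
      have := isRankFunction_rectRank.isMin h
      simp only [rectRank] at this
      lia
    have hmax : ¬IsMax v := fun h => by
      have := isRankFunction_rectRank.isMax h
      have := isRankFunction_rectRank.add_two_le u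
      simp only [rectRank] at *
      lia
    rw [Finset.sum_congr rfl fun s hs => if_pos ?_, Finset.sum_congr rfl fun s hs => if_pos ?_,
      upperSum, lowerSum, if_neg hmin, if_neg hmax]
    · ring
    all_goals
      simp only [mem_lowerCovers, mem_upperCovers, rect_covBy_iff] at hs
      simp only [IsRightAbove, rectRank, Fin.lt_def]
      lia
  · rw [Finset.sum_eq_single_of_mem (u.1, v.2) ?_ fun s hs hne => if_neg ?_,
      Finset.sum_eq_single_of_mem (v.1, u.2) ?_ fun s hs hne => if_neg ?_, if_pos ?_, if_pos ?_,
      upperSum_mul_eq_lowerSum_div hF near.1 near.2, div_eq_mul_inv]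
    all_goals
      simp only [mem_lowerCovers, mem_upperCovers, rect_covBy_iff, IsRightAbove, rectRank,
        Fin.lt_def, ne_eq, Prod.ext_iff, Fin.ext_iff] at *
      lia
  · rw [Finset.sum_eq_zero fun s hs => if_neg ?_, Finset.sum_eq_zero fun s hs => if_neg ?_]
    · ring
    all_goals
      simp only [mem_lowerCovers, mem_upperCovers, rect_covBy_iff] at hs
      simp only [IsRightAbove, rectRank, Fin.lt_def]
      lia

lemma diagonal_mul_coverMatrix_mul_jumpMatrix [LinearOrder K] [IsStrictOrderedRing K]
    (hQ : 0 < Q) (hF : ∀ p, 0 < F p) :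
    diagonal (downSlack F) * coverMatrix _ K * jumpMatrix F =
      jumpMatrix F * (coverMatrix _ K * diagonal (upSlack Q F)) := by
  ext u v
  have := lowerSum_pos hF u
  have := upperSum_pos hQ hF v
  have := hF u
  have := hF v
  have left : (coverMatrix (Fin (a + 1) × Fin (b + 1)) K * jumpMatrix F) u v =
      (∑ s ∈ lowerCovers u, if IsRightAbove s v then F s else 0) / F v := by
    simp only [mul_apply, coverMatrix, jumpMatrix, of_apply, ite_mul, one_mul, zero_mul,
      lowerCovers, Finset.sum_filter, Finset.sum_div, ite_div, zero_div]
  have right : (jumpMatrix F * coverMatrix (Fin (a + 1) × Fin (b + 1)) K) u v =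
      F u * ∑ s ∈ upperCovers v, if IsRightAbove u s then (F s)⁻¹ else 0 := by
    simp only [mul_apply, coverMatrix, jumpMatrix, of_apply, mul_ite, mul_one, mul_zero,
      upperCovers, Finset.sum_filter, Finset.mul_sum, div_eq_mul_inv]
  have key := upperSum_mul_sum_lowerCovers (Q := Q) (fun p => (hF p).ne') u v
  rw [Matrix.mul_assoc, ← Matrix.mul_assoc (jumpMatrix F), diagonal_mul, mul_diagonal, left, right,
    downSlack, upSlack]
  generalize (∑ s ∈ upperCovers v, if IsRightAbove u s then (F s)⁻¹ else 0) = R at key ⊢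
  field_simp
  linear_combination key

lemma jumpMatrix_bottom_row {v v' : Fin (a + 1)} (hv : (v : ℕ) + 1 = v')
    (s : Fin (a + 1) × Fin (b + 1)) :
    jumpMatrix F s (v, 0) = diagonal (downSlack F) s (v', 0) := by
  by_cases hs : s = (v', 0)
  · have hjump : IsRightAbove s (v, 0) := by
      simp only [hs, IsRightAbove, rectRank, Fin.lt_def, Fin.val_zero]
      lia
    have hmin : ¬IsMin ((v', 0) : Fin (a + 1) × Fin (b + 1)) := fun h => by
      have := isRankFunction_rectRank.isMin h
      simp only [rectRank, Fin.val_zero] at this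
      lia
    have lowerCovers_eq : lowerCovers (v', 0) = {((v, 0) : Fin (a + 1) × Fin (b + 1))} := by
      ext w
      simp only [mem_lowerCovers, rect_covBy_iff, Finset.mem_singleton, Prod.ext_iff, Fin.ext_iff,
        Fin.val_zero]
      lia
    rw [jumpMatrix, of_apply, if_pos hjump, hs, diagonal_apply_eq, downSlack, lowerSum,
      if_neg hmin, lowerCovers_eq, Finset.sum_singleton, add_zero]
  · rw [diagonal_apply_ne _ hs, jumpMatrix, of_apply, if_neg]
    simp only [IsRightAbove, rectRank, Fin.lt_def, Prod.ext_iff, Fin.ext_iff, Fin.val_zero] at *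
    lia

lemma jumpMatrix_top_row {u u' : Fin (a + 1)} (hu : (u : ℕ) + 1 = u')
    (s : Fin (a + 1) × Fin (b + 1)) :
    jumpMatrix F (u', Fin.last b) s = diagonal (upSlack Q F) (u, Fin.last b) s := by
  by_cases hs : (u, Fin.last b) = s
  · have hjump : IsRightAbove (u', Fin.last b) s := by
      simp only [← hs, IsRightAbove, rectRank, Fin.lt_def]
      lia
    have hmax : ¬IsMax (u, Fin.last b) := fun h => by
      have := isRankFunction_rectRank.isMax h
      simp only [rectRank, Fin.val_last] at this
      lia
    have upperCovers_eq : upperCovers (u, Fin.last b) = {(u', Fin.last b)} := by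
      ext w
      simp only [mem_upperCovers, rect_covBy_iff, Finset.mem_singleton, Prod.ext_iff, Fin.ext_iff,
        Fin.val_last]
      lia
    rw [jumpMatrix, of_apply, if_pos hjump, ← hs, diagonal_apply_eq, upSlack, upperSum,
      if_neg hmax, upperCovers_eq, Finset.sum_singleton, add_zero, _root_.mul_inv_rev,
      _root_.inv_inv, div_eq_mul_inv]
  · rw [diagonal_apply_ne _ hs, jumpMatrix, of_apply, if_neg]
    simp only [IsRightAbove, rectRank, Fin.lt_def, Prod.ext_iff, Fin.ext_iff, Fin.val_last] at *
    lia

variable [LinearOrder K] [IsStrictOrderedRing K]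

lemma pathMatrix_downSlack_eq_pathMatrix_upSlack (hQ : 0 < Q) (hF : ∀ p, 0 < F p)
    {u u' v v' : Fin (a + 1)} (hu : (u : ℕ) + 1 = u') (hv : (v : ℕ) + 1 = v') :
    pathMatrix (downSlack F) (u', Fin.last b) (v', 0) =
      pathMatrix (upSlack Q F) (u, Fin.last b) (v, 0) := by
  have hr := isRankFunction_rectRank (a := a) (b := b)
  have intertwine := inv_mul_eq_mul_inv_of_semiconj
    (hr.isUnit_one_sub_diagonal_mul_coverMatrix (downSlack F))
    (hr.isUnit_one_sub_coverMatrix_mul_diagonal (upSlack Q F)) (W := jumpMatrix F) (by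
      rw [Matrix.sub_mul, Matrix.mul_sub, Matrix.one_mul, Matrix.mul_one,
        diagonal_mul_coverMatrix_mul_jumpMatrix hQ hF])
  have entry := congrFun₂ intertwine (u', Fin.last b) (v, 0)
  rw [pathMatrix, hr.pathMatrix_eq_diagonal_mul_inv]
  simpa only [mul_apply, jumpMatrix_bottom_row hv, jumpMatrix_top_row (Q := Q) hu] using entry

end JumpMatrix

section Reciprocity

variable {a b : ℕ} {K : Type*} [Field K] {Q : K} {F : ℕ → Fin (a + 1) × Fin (b + 1) → K} {n : ℤ}
  {p : Fin (a + 1) × Fin (b + 1)} {s t : ℕ}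

/-- Reciprocity in row `n` for the orbit `F 0, F 1, …` of a rowmotion on the rectangle: the value at
`(i, n)` determines the value at the antipode after `i + n + 1` steps. Outside the rectangle the
equation reads `0 = Q / 0`. -/
def RowReciprocity (Q : K) (F : ℕ → Fin (a + 1) × Fin (b + 1) → K) (n : ℤ) : Prop :=
  ∀ (s t : ℕ) (i : ℤ), (s : ℤ) = t + i + n + 1 →
    rectExt (F s) (a - i) (b - n) = Q / rectExt (F t) i n

lemma rowReciprocity_of_notMem (hn : ¬(0 ≤ n ∧ n ≤ b)) : RowReciprocity Q F n := fun s t i _ => by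
  rw [rectExt_eq_zero (by lia), rectExt_eq_zero (by lia), div_zero]

lemma intCast_val_rev (i : Fin (a + 1)) : ((i.rev : ℕ) : ℤ) = a - i := by
  rw [Fin.val_rev]
  omega

lemma isMin_rev_iff : IsMin (p.1.rev, p.2.rev) ↔ IsMax p := by
  simp [isMin_iff_eq_bot, isMax_iff_eq_top, Prod.ext_iff, Fin.rev_eq_iff]

lemma isMax_rev_iff : IsMax (p.1.rev, p.2.rev) ↔ IsMin p := by
  simp [isMin_iff_eq_bot, isMax_iff_eq_top, Prod.ext_iff, Fin.rev_eq_iff]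

lemma RowReciprocity.apply_rev (h : RowReciprocity Q F p.2) (hs : s = t + p.1 + p.2 + 1) :
    F s (p.1.rev, p.2.rev) = Q / F t p := by
  have := h s t p.1 (by omega)
  rwa [rectExt_eq (p := (p.1.rev, p.2.rev)) (intCast_val_rev _) (intCast_val_rev _),
    rectExt_eq rfl rfl] at this

lemma RowReciprocity.upperSum_rev (h : RowReciprocity Q F p.2) (h' : RowReciprocity Q F (p.2 - 1))
    (hs : s = t + p.1 + p.2 + 1) :
    upperSum Q (F s) (p.1.rev, p.2.rev) = lowerSum (F (t + 1)) p / Q := by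
  have right := h s (t + 1) (p.1 - 1) (by omega)
  have above := h' s (t + 1) p.1 (by omega)
  rw [upperSum, lowerSum, sum_upperCovers_rect, sum_lowerCovers_rect, rectExt_inv, rectExt_inv,
    intCast_val_rev, intCast_val_rev, sub_add, right, sub_add, above, inv_div, inv_div,
    if_congr isMax_rev_iff rfl rfl, add_div, add_div, ite_div, one_div, zero_div]

variable [LinearOrder K] [IsStrictOrderedRing K]

lemma pathMatrix_downSlack_eq_of_step (hQ : 0 < Q) (hF : ∀ t p, 0 < F t p)
    (step : ∀ t, IsRowmotionStep Q (F t) (F (t + 1))) (t : ℕ) {i : ℕ} {u v k : Fin (a + 1)}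
    (hv : (v : ℕ) = i) (hu : (u : ℕ) = k + i) :
    pathMatrix (downSlack (F t)) (u, Fin.last b) (v, 0) = F (t + i) (k, Fin.last b) := by
  induction i generalizing t u v with
  | zero =>
    obtain rfl : u = k := Fin.ext (by lia)
    obtain rfl : v = 0 := Fin.ext hv
    exact isRankFunction_rectRank.pathMatrix_downSlack_bot (hF t) _
  | succ i ih =>
    let u' : Fin (a + 1) := ⟨k + i, by lia⟩
    let v' : Fin (a + 1) := ⟨i, by lia⟩
    rw [pathMatrix_downSlack_eq_pathMatrix_upSlack hQ (hF t) (u := u') (v := v') (by lia)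
      hv.symm, ← (step t).downSlack_eq (hF (t + 1)), ih (t + 1) rfl rfl,
      Nat.add_right_comm, Nat.add_assoc]

lemma apply_top_row_eq_div_bottom_row (hQ : 0 < Q) (hF : ∀ t p, 0 < F t p)
    (step : ∀ t, IsRowmotionStep Q (F t) (F (t + 1))) (t : ℕ) (i : Fin (a + 1)) :
    F (t + 1 + i) (i.rev, Fin.last b) = Q / F t (i, 0) := by
  rw [← isRankFunction_rectRank.pathMatrix_upSlack_top hQ (hF t),
    ← (step t).downSlack_eq (hF (t + 1))]
  refine (pathMatrix_downSlack_eq_of_step hQ hF step (t + 1) rfl ?_).symm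
  rw [Fin.val_rev, Fin.top_eq_last, Fin.val_last]
  omega

lemma rowReciprocity_zero (hQ : 0 < Q) (hF : ∀ t p, 0 < F t p)
    (step : ∀ t, IsRowmotionStep Q (F t) (F (t + 1))) : RowReciprocity Q F 0 := fun s t i hs => by
  by_cases hi : 0 ≤ i ∧ i ≤ a
  · lift i to ℕ using hi.1
    obtain rfl : s = t + 1 + i := by lia
    have edge := apply_top_row_eq_div_bottom_row hQ hF step t ⟨i, by lia⟩
    rwa [rectExt_eq (p := (Fin.rev ⟨i, by lia⟩, Fin.last b)) (intCast_val_rev _) (by simp),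
      rectExt_eq (p := (⟨i, by lia⟩, 0)) (by rfl) (by rfl)]
  · rw [rectExt_eq_zero (by lia), rectExt_eq_zero (by lia), div_zero]

lemma RowReciprocity.lowerSum_rev (hQ : 0 < Q) (hF : ∀ t p, 0 < F t p)
    (step : ∀ t, IsRowmotionStep Q (F t) (F (t + 1))) (h : RowReciprocity Q F p.2)
    (h' : RowReciprocity Q F (p.2 - 1)) (hs : s = t + p.1 + p.2 + 1) :
    lowerSum (F (s + 1)) (p.1.rev, p.2.rev) = Q * upperSum Q (F t) p := by
  have step_rev := step s (p.1.rev, p.2.rev)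
  rw [h.apply_rev (t := t + 1) (by lia), h.apply_rev hs, h.upperSum_rev h' hs, step t p] at step_rev
  have := hF t p
  have := lowerSum_pos (hF (t + 1)) p
  have := upperSum_pos hQ (hF t) p
  field_simp at step_rev
  exact step_rev.symm

lemma RowReciprocity.succ (hQ : 0 < Q) (hF : ∀ t p, 0 < F t p)
    (step : ∀ t, IsRowmotionStep Q (F t) (F (t + 1))) {n : ℕ} (h : RowReciprocity Q F n)
    (h' : RowReciprocity Q F (n - 1)) : RowReciprocity Q F (n + 1) := fun s t i hs => by
  by_cases hi : 0 ≤ i ∧ i ≤ a ∧ n ≤ b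
  · lift i to ℕ using hi.1
    obtain rfl : s = t + i + n + 1 + 1 := by lia
    have key := h.lowerSum_rev hQ hF step h' (p := (⟨i, by lia⟩, ⟨n, by lia⟩)) (t := t) rfl
    have right := h (t + i + n + 1 + 1) t (i + 1) (by omega)
    rw [upperSum, lowerSum, sum_upperCovers_rect, sum_lowerCovers_rect, rectExt_inv, rectExt_inv,
      intCast_val_rev, intCast_val_rev, sub_sub, right, sub_sub, if_congr isMin_rev_iff rfl rfl,
      mul_add, mul_add, mul_ite, mul_inv_cancel₀ hQ.ne', mul_zero, add_left_inj,
      div_eq_mul_inv] at key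
    rw [div_eq_mul_inv]
    exact add_left_cancel key
  · rw [rectExt_eq_zero (by lia), rectExt_eq_zero (by lia), div_zero]

lemma rowReciprocity_natCast (hQ : 0 < Q) (hF : ∀ t p, 0 < F t p)
    (step : ∀ t, IsRowmotionStep Q (F t) (F (t + 1))) (n : ℕ) : RowReciprocity Q F n := by
  suffices RowReciprocity Q F (n - 1) ∧ RowReciprocity Q F n from this.2
  induction n with
  | zero => exact ⟨rowReciprocity_of_notMem (by lia), rowReciprocity_zero hQ hF step⟩
  | succ n ih => exact ⟨by simpa using ih.2, by simpa using ih.2.succ hQ hF step ih.1⟩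

lemma birRowmotion_iterate_rev (hQ : 0 < Q) {F : Fin (a + 1) × Fin (b + 1) → K}
    (hF : ∀ p, 0 < F p) (p : Fin (a + 1) × Fin (b + 1)) :
    (birRowmotion rectRank (a + 1 + (b + 1)) Q)^[p.1 + p.2 + 1] F (p.1.rev, p.2.rev) =
      Q / F p := by
  have pos := birRowmotion_iterate_pos (r := rectRank) (q := a + 1 + (b + 1)) hQ hF
  have step (t : ℕ) : IsRowmotionStep Q ((birRowmotion rectRank (a + 1 + (b + 1)) Q)^[t] F)
      ((birRowmotion rectRank (a + 1 + (b + 1)) Q)^[t + 1] F) := by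
    rw [Function.iterate_succ_apply']
    exact isRankFunction_rectRank.isRowmotionStep_birRowmotion Q _
  exact (rowReciprocity_natCast hQ pos step p.2).apply_rev (t := 0) (by lia)

end Reciprocity

section Tropicalization

open Filter Asymptotics

/-- `F` is eventually positive and has the growth order of `x ^ n` as `x` tends to infinity. Growth
orders turn `+`, `*`, `/` into `max`, `+`, `-`. -/
def HasGrowth (F : ℝ → ℝ) (n : ℤ) : Prop :=
  (∀ᶠ x in atTop, 0 < F x) ∧ F =Θ[atTop] fun x => x ^ n

variable {F G : ℝ → ℝ} {m n : ℤ}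

lemma hasGrowth_zpow (n : ℤ) : HasGrowth (fun x => x ^ n) n :=
  ⟨(eventually_gt_atTop 0).mono fun _ hx => zpow_pos hx n, isTheta_rfl⟩

lemma zpow_isBigO_zpow (h : m ≤ n) : (fun x : ℝ => x ^ m) =O[atTop] fun x => x ^ n :=
  .of_norm_eventuallyLE <| (eventually_ge_atTop 1).mono fun x hx => by
    simp only [norm_zpow]
    rw [Real.norm_of_nonneg (by positivity)]
    exact zpow_le_zpow_right₀ hx h

lemma le_of_zpow_isBigO_zpow (h : (fun x : ℝ => x ^ m) =O[atTop] fun x => x ^ n) : m ≤ n := by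
  by_contra! hlt
  have little : (fun x : ℝ => x ^ n) =o[atTop] fun x => x ^ m := by
    refine isLittleO_of_tendsto' ?_ ?_
    · filter_upwards [eventually_ne_atTop 0] with x hx hzero using
        absurd hzero (zpow_ne_zero m hx)
    · refine (tendsto_zpow_atTop_zero (sub_neg.2 hlt)).congr' ?_
      filter_upwards [eventually_ne_atTop 0] with x hx using zpow_sub₀ hx n m
  exact h.not_isLittleO ((eventually_ne_atTop 0).mono fun x hx => zpow_ne_zero m hx).frequently
    little

namespace HasGrowth

lemma mul (hF : HasGrowth F m) (hG : HasGrowth G n) : HasGrowth (fun x => F x * G x) (m + n) := by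
  refine ⟨hF.1.mp (hG.1.mono fun _ hG hF => mul_pos hF hG),
    (hF.2.mul hG.2).trans_eventuallyEq ?_⟩
  filter_upwards [eventually_ne_atTop 0] with x hx using (zpow_add₀ hx m n).symm

lemma inv (hF : HasGrowth F n) : HasGrowth (fun x => (F x)⁻¹) (-n) :=
  ⟨hF.1.mono fun _ => inv_pos.2, by simpa only [zpow_neg] using hF.2.inv⟩

lemma div (hF : HasGrowth F m) (hG : HasGrowth G n) : HasGrowth (fun x => F x / G x) (m - n) := by
  simpa only [div_eq_mul_inv, sub_eq_add_neg] using hF.mul hG.inv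

lemma sum {ι : Type*} {s : Finset ι} {F : ℝ → ι → ℝ} {h : ι → ℤ}
    (hF : ∀ i ∈ s, HasGrowth (F · i) (h i)) (hle : ∀ i ∈ s, h i ≤ n) (hmem : ∃ i ∈ s, h i = n) :
    HasGrowth (fun x => ∑ i ∈ s, F x i) n := by
  obtain ⟨j, hj, rfl⟩ := hmem
  have pos : ∀ᶠ x in atTop, ∀ i ∈ s, 0 < F x i := (s.eventually_all).2 fun i hi => (hF i hi).1
  have le_sum : ∀ᶠ x in atTop, F x j ≤ ∑ i ∈ s, F x i :=
    pos.mono fun x hx => Finset.single_le_sum (fun i hi => (hx i hi).le) hj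
  refine ⟨by filter_upwards [pos, le_sum] with x hx hle using (hx j hj).trans_le hle,
    .fun_sum fun i hi => (hF i hi).2.1.trans (zpow_isBigO_zpow (hle i hi)), (hF j hj).2.2.trans ?_⟩
  refine .of_norm_eventuallyLE ?_
  filter_upwards [pos, le_sum] with x hx hle
  rwa [Real.norm_of_nonneg (hx j hj).le]

lemma unique (hm : HasGrowth F m) (hn : HasGrowth F n) : m = n :=
  have := hm.2.symm.trans hn.2
  le_antisymm (le_of_zpow_isBigO_zpow this.1) (le_of_zpow_isBigO_zpow this.2)

lemma congr' (hF : HasGrowth F n) (h : F =ᶠ[atTop] G) : HasGrowth G n :=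
  ⟨by filter_upwards [h, hF.1] with x hx hpos using hx ▸ hpos, h.symm.trans_isTheta hF.2⟩

end HasGrowth

variable {P : Type*} [PartialOrder P] [Fintype P] {r : P → ℕ} {q ℓ : ℕ} {h : P → ℤ}
  {F : ℝ → P → ℝ}

namespace IsHeight

lemma exists_eq_lowerMax (hh : IsHeight ℓ h) {p : P} (hp : ¬IsMin p) :
    ∃ u, u ⋖ p ∧ h u = lowerMax h p := by
  obtain ⟨u, hu, hmax⟩ := Finset.exists_max_image _ h (lowerCovers_nonempty_iff.2 hp)
  exact ⟨u, mem_lowerCovers.1 hu, (le_lowerMax (mem_lowerCovers.1 hu)).antisymm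
    ((Finset.fold_max_le _).2 ⟨hh.nonneg u, hmax⟩)⟩

lemma exists_eq_upperMin (hh : IsHeight ℓ h) {p : P} (hp : ¬IsMax p) :
    ∃ u, p ⋖ u ∧ h u = upperMin ℓ h p := by
  obtain ⟨u, hu, hmin⟩ := Finset.exists_min_image _ h (upperCovers_nonempty_iff.2 hp)
  exact ⟨u, mem_upperCovers.1 hu, ((Finset.le_fold_min _).2 ⟨hh.le u, hmin⟩).antisymm
    (upperMin_le (mem_upperCovers.1 hu))⟩

lemma hasGrowth_lowerSum (hh : IsHeight ℓ h) (hF : ∀ p, HasGrowth (F · p) (h p)) (p : P) :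
    HasGrowth (fun x => lowerSum (F x) p) (lowerMax h p) := by
  by_cases hp : IsMin p
  · have empty := Finset.not_nonempty_iff_eq_empty.1 (lowerCovers_nonempty_iff.not_left.2 hp)
    simpa [lowerSum, lowerMax, empty, hp] using hasGrowth_zpow 0
  · obtain ⟨u, hu, hmax⟩ := hh.exists_eq_lowerMax hp
    simpa only [lowerSum, if_neg hp, add_zero] using HasGrowth.sum (fun u _ => hF u)
      (fun u hu => le_lowerMax (mem_lowerCovers.1 hu)) ⟨u, mem_lowerCovers.2 hu, hmax⟩

lemma hasGrowth_upperSum (hh : IsHeight ℓ h) (hF : ∀ p, HasGrowth (F · p) (h p)) (p : P) :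
    HasGrowth (fun x => upperSum (x ^ ℓ) (F x) p) (-upperMin ℓ h p) := by
  by_cases hp : IsMax p
  · have empty := Finset.not_nonempty_iff_eq_empty.1 (upperCovers_nonempty_iff.not_left.2 hp)
    simpa [upperSum, upperMin, empty, hp] using hasGrowth_zpow (-ℓ)
  · obtain ⟨u, hu, hmin⟩ := hh.exists_eq_upperMin hp
    simpa only [upperSum, if_neg hp, add_zero] using HasGrowth.sum (fun u _ => (hF u).inv)
      (fun u hu => neg_le_neg (upperMin_le (mem_upperCovers.1 hu)))
      ⟨u, mem_upperCovers.2 hu, congrArg _ hmin⟩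

lemma hasGrowth_birToggle (hh : IsHeight ℓ h) (hF : ∀ p, HasGrowth (F · p) (h p)) (k : ℕ) (p : P) :
    HasGrowth (fun x => birToggle r (x ^ ℓ) k (F x) p) (plToggle r ℓ k h p) := by
  by_cases hp : r p = k
  · simp only [birToggle, plToggle, if_pos hp]
    convert (hh.hasGrowth_lowerSum hF p).div ((hF p).mul (hh.hasGrowth_upperSum hF p)) using 1
    ring
  · simpa only [birToggle, plToggle, if_neg hp] using hF p

lemma hasGrowth_birRowmotion (hh : IsHeight ℓ h) (hr : IsRankFunction r q)
    (hF : ∀ p, HasGrowth (F · p) (h p)) (p : P) :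
    HasGrowth (fun x => birRowmotion r q (x ^ ℓ) (F x) p) (plRowmotion r q ℓ h p) := by
  simp only [birRowmotion, plRowmotion]
  induction List.range (q - 1) generalizing h F with
  | nil => exact hF p
  | cons k _ ih => exact ih (isHeight_plToggle hh hr k) (hh.hasGrowth_birToggle hF k)

lemma hasGrowth_birRowmotion_iterate (hh : IsHeight ℓ h) (hr : IsRankFunction r q)
    (hF : ∀ p, HasGrowth (F · p) (h p)) (t : ℕ) (p : P) :
    HasGrowth (fun x => (birRowmotion r q (x ^ ℓ))^[t] (F x) p) ((plRowmotion r q ℓ)^[t] h p) := by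
  induction t generalizing h F with
  | zero => exact hF p
  | succ _ ih => exact ih (isHeight_plRowmotion hh hr) (hh.hasGrowth_birRowmotion hr hF)

end IsHeight

end Tropicalization

section Promotion

lemma IsHeight.plRowmotion_iterate_rev {a b ℓ : ℕ} {h : Fin (a + 1) × Fin (b + 1) → ℤ}
    (hh : IsHeight ℓ h) (p : Fin (a + 1) × Fin (b + 1)) :
    (plRowmotion rectRank (a + 1 + (b + 1)) ℓ)^[p.1 + p.2 + 1] h (p.1.rev, p.2.rev) =
      ℓ - h p := by
  have growth := hh.hasGrowth_birRowmotion_iterate isRankFunction_rectRank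
    (fun u => hasGrowth_zpow (h u)) (p.1 + p.2 + 1) (p.1.rev, p.2.rev)
  refine growth.unique (((hasGrowth_zpow ℓ).div (hasGrowth_zpow (h p))).congr' ?_)
  filter_upwards [Filter.eventually_gt_atTop 0] with x hx
  rw [zpow_natCast, birRowmotion_iterate_rev (by positivity) fun u => zpow_pos hx (h u)]

lemma isPStrict_proP_iterate {P : Type*} [PartialOrder P] [Finite P] {r : P → ℕ} {q ℓ : ℕ}
    {f : P × Fin ℓ → ℤ} (hr : IsRankFunction r q) (hf : IsPStrict P ℓ q f) (t : ℕ) :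
    IsPStrict P ℓ q ((proP P ℓ q)^[t] f) := by
  have := Fintype.ofFinite P
  induction t generalizing f with
  | zero => exact hf
  | succ t ih =>
    obtain ⟨h, hh, rfl⟩ := hf.exists_heightLabeling_eq hr
    rw [Function.iterate_succ_apply, hh.proP_heightLabeling hr]
    exact ih ((isHeight_plRowmotion hh hr).isPStrict_heightLabeling hr)

variable {a b ℓ : ℕ} {f : (Fin (a + 1) × Fin (b + 1)) × Fin ℓ → ℤ}

lemma IsPStrict.proP_iterate_rev
    (hf : IsPStrict (Fin (a + 1) × Fin (b + 1)) ℓ (a + 1 + (b + 1)) f)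
    (x : Fin (a + 1)) (y : Fin (b + 1)) (z : Fin ℓ) :
    (proP _ ℓ (a + 1 + (b + 1)))^[x + y + 1] f ((x.rev, y.rev), z.rev) =
      a + 1 + (b + 1) + 1 - f ((x, y), z) := by
  obtain ⟨h, hh, rfl⟩ := hf.exists_heightLabeling_eq isRankFunction_rectRank
  rw [hh.proP_iterate_heightLabeling isRankFunction_rectRank, heightLabeling, heightLabeling,
    hh.plRowmotion_iterate_rev (x, y)]
  simp only [rectRank, Nat.cast_add, Fin.val_rev]
  grind

end Promotion

lemma sum_range_add_eq_of_periodic {M : Type*} [AddCommMonoid M] {φ : ℕ → M} {n : ℕ}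
    (h : Function.Periodic φ n) (s : ℕ) :
    ∑ i ∈ Finset.range n, φ (i + s) = ∑ i ∈ Finset.range n, φ i := by
  induction s with
  | zero => rfl
  | succ s ih =>
    rw [← ih]
    cases n with
    | zero => rfl
    | succ m =>
      rw [Finset.sum_range_succ, Finset.sum_range_succ', zero_add, ← h s]
      simp only [add_comm, add_left_comm]

/-- for antipodal elements `p = (x,y,z)` and
`p* = (a+1−x, b+1−y, ℓ+1−z)` of `[a]×[b]×[ℓ]`, the statistic
`χ_S(f) = f(p) + f(p*)` is `(a+b+1)`-mesic on `L_{([a]×[b])×[ℓ]}(R^{a+b})` under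
promotion: for every promotion orbit (of size the minimal period `n` of any of its
elements), the average of `χ_S` over the orbit equals `a+b+1`. -/
theorem pstrict_antipodal_homomesy (a b ℓ : ℕ)
    (f : (Fin a × Fin b) × Fin ℓ → ℤ)
    (hf : IsPStrict (Fin a × Fin b) ℓ (a + b) f)
    (x : Fin a) (y : Fin b) (z : Fin ℓ)
    (n : ℕ) (hn : 0 < n)
    (hper : (proP (Fin a × Fin b) ℓ (a + b))^[n] f = f)
    (hmin : ∀ m : ℕ, 0 < m → m < n → (proP (Fin a × Fin b) ℓ (a + b))^[m] f ≠ f) :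
    ∑ i ∈ Finset.range n,
        ((proP (Fin a × Fin b) ℓ (a + b))^[i] f ((x, y), z) +
          (proP (Fin a × Fin b) ℓ (a + b))^[i] f ((x.rev, y.rev), z.rev)) =
      ((a : ℤ) + b + 1) * n := by
  obtain ⟨a, rfl⟩ := Nat.exists_eq_add_one.2 x.pos
  obtain ⟨b, rfl⟩ := Nat.exists_eq_add_one.2 y.pos
  set pro := proP (Fin (a + 1) × Fin (b + 1)) ℓ (a + 1 + (b + 1))
  have strict (i : ℕ) : IsPStrict _ ℓ (a + 1 + (b + 1)) (pro^[i] f) :=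
    isPStrict_proP_iterate isRankFunction_rectRank hf i
  have reciprocity (i : ℕ) : pro^[i + (x + y + 1)] f ((x.rev, y.rev), z.rev) =
      a + 1 + (b + 1) + 1 - pro^[i] f ((x, y), z) := by
    rw [add_comm i, Function.iterate_add_apply, (strict i).proP_iterate_rev]
  have periodic : Function.Periodic (fun i => pro^[i] f ((x.rev, y.rev), z.rev)) n := fun i => by
    simp only [Function.iterate_add_apply, hper]
  rw [Finset.sum_add_distrib, ← sum_range_add_eq_of_periodic periodic (x + y + 1),
    ← Finset.sum_add_distrib]
  simp only [reciprocity, add_sub_cancel, Finset.sum_const, Finset.card_range, nsmul_eq_mul]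
  push_cast
  ring
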